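/- Let e ≥ 42 and, in four variables, let F = (14,14,e-28,0), G_1 = (e-12,4,4,4), G_2 = (4,e-12,4,4), G_3 = (4,4,e-12,4), G_4 = (4,4,4,e-12) be exponent vectors of degree-e monomials. For every k with 1 ≤ k ≤ 4, let h(i) be the number of monomials of degree i dividing at least one of F, G_1, …, G_k. Then h(e-14) = 120 + 125k, h(e-13) = 105 + 125k, h(e-12) = 91 + 125k, and h(e-13)^2 < h(e-14)·h(e-12); in particular h is not log-concave. (This gives infinite families of non-log-concave pure O-sequences of codimension 4 and each type t = 2, 3, 4, 5.) -/

import Mathlib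

/-- `divCountSet M i` is the number of monomials of degree `i` (in `r`
variables) dividing at least one monomial whose exponent vector lies in `M`:
the `i`-th entry of the pure `O`-sequence generated by `M`. -/
noncomputable def divCountSet {r : ℕ} (M : Set (Fin r → ℕ)) (i : ℕ) : ℕ :=
  {b : Fin r → ℕ | (∑ j, b j = i) ∧ ∃ a ∈ M, ∀ j, b j ≤ a j}.ncard

/-- The exponent vectors of the degree `i` divisors of the monomial with exponent vector `a`. -/
def divisorsOfDegree {r : ℕ} (a : Fin r → ℕ) (i : ℕ) : Finset (Fin r → ℕ) :=
  (Finset.Iic a).filter fun b => ∑ j, b j = i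

theorem mem_divisorsOfDegree {r : ℕ} {a b : Fin r → ℕ} {i : ℕ} :
    b ∈ divisorsOfDegree a i ↔ (∀ j, b j ≤ a j) ∧ ∑ j, b j = i := by
  simp [divisorsOfDegree, Pi.le_def]

theorem divCountSet_coe {r : ℕ} (M : Finset (Fin r → ℕ)) (i : ℕ) :
    divCountSet (M : Set (Fin r → ℕ)) i = (M.biUnion fun a => divisorsOfDegree a i).card := by
  rw [divCountSet, ← Set.ncard_coe_finset]
  congr 1
  ext b
  simp only [Set.mem_ofPred_eq, Finset.mem_coe, Finset.mem_biUnion, mem_divisorsOfDegree]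
  tauto

/-- If one exponent is at least `i` and the other `n` exponents equal `c` with `n * c ≤ i`, the
distinguished coordinate of a degree `i` divisor is determined by the other ones, which are
arbitrary. -/
theorem card_divisorsOfDegree_insertNth {n : ℕ} (j : Fin (n + 1)) {c N i : ℕ}
    (hc : n * c ≤ i) (hN : i ≤ N) :
    (divisorsOfDegree (j.insertNth N fun _ => c : Fin (n + 1) → ℕ) i).card = (c + 1) ^ n := by
  have hcard : (Fintype.piFinset fun _ : Fin n => Finset.range (c + 1)).card = (c + 1) ^ n := by
    simp
  rw [← hcard]
  refine Finset.card_nbij' (fun b => j.removeNth b)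
    (fun t => j.insertNth (i - ∑ m, t m) t) ?_ ?_ ?_ ?_
  · intro b hb
    obtain ⟨hb, -⟩ := mem_divisorsOfDegree.1 hb
    simp only [Finset.mem_coe, Fintype.mem_piFinset, Finset.mem_range, Nat.lt_succ_iff]
    intro m
    simpa [Fin.removeNth] using hb (j.succAbove m)
  · intro t ht
    simp only [Finset.mem_coe, Fintype.mem_piFinset, Finset.mem_range, Nat.lt_succ_iff] at ht
    have hsum : ∑ m, t m ≤ n * c := by
      simpa using Finset.sum_le_sum fun m (_ : m ∈ Finset.univ) => ht m
    refine mem_divisorsOfDegree.2 ⟨?_, ?_⟩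
    · rw [Fin.forall_iff_succAbove j]
      refine ⟨?_, fun m => ?_⟩
      · simp only [Fin.insertNth_apply_same]
        omega
      · simpa using ht m
    · simp only [Fin.sum_univ_succAbove _ j, Fin.insertNth_apply_same,
        Fin.insertNth_apply_succAbove]
      omega
  · intro b hb
    obtain ⟨-, hb⟩ := mem_divisorsOfDegree.1 hb
    rw [Fin.sum_univ_succAbove _ j] at hb
    have hj : i - ∑ m, j.removeNth b m = b j := by
      simp only [Fin.removeNth]
      omega
    simp only [hj, Fin.insertNth_self_removeNth]
  · intro t _
    simp

/-- Divisors of codegree `d` correspond to monomials of degree `d` in three variables when all three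
exponents are at least `d`. -/
theorem card_divisorsOfDegree_of_three {p q r d i : ℕ} (hp : d ≤ p) (hq : d ≤ q) (hr : d ≤ r)
    (hi : i + d = p + q + r) :
    (divisorsOfDegree ![p, q, r, 0] i).card = ∑ x ∈ Finset.range (d + 1), (x + 1) := by
  have hcard : ((Finset.range (d + 1)).sigma fun x => Finset.range (x + 1)).card =
      ∑ x ∈ Finset.range (d + 1), (x + 1) := by
    simp [Finset.card_sigma]
  rw [← hcard]
  refine Finset.card_nbij' (fun b => ⟨p - b 0 + (q - b 1), p - b 0⟩)
    (fun u => ![p - u.2, q - (u.1 - u.2), r - (d - u.1), 0]) ?_ ?_ ?_ ?_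
  · intro b hb
    simp [mem_divisorsOfDegree, Fin.forall_fin_succ, Fin.sum_univ_four] at hb
    simp
    omega
  · rintro ⟨x, y⟩ hu
    simp at hu
    simp [mem_divisorsOfDegree, Fin.forall_fin_succ, Fin.sum_univ_four]
    omega
  · intro b hb
    simp [mem_divisorsOfDegree, Fin.forall_fin_succ, Fin.sum_univ_four] at hb
    ext m
    fin_cases m <;> simp <;> omega
  · rintro ⟨x, y⟩ hu
    simp at hu
    have hy : p - (p - y) = y := by omega
    have hx : y + (q - (q - (x - y))) = x := by omega
    simp [hy, hx]

theorem divCountSet_of_codegree {e d k : ℕ} (he : 42 ≤ e) (hd : 12 ≤ d) (hd' : d ≤ 14)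
    (hk : k ≤ 4) {G : Fin 4 → Fin 4 → ℕ} (hG : ∀ j, G j = j.insertNth (e - 12) fun _ => 4) :
    divCountSet ({![14, 14, e - 28, 0]} ∪ {G j | (j : Fin 4) (_ : (j : ℕ) < k)}) (e - d) =
      ∑ x ∈ Finset.range (d + 1), (x + 1) + 125 * k := by
  have hGle : ∀ {j : Fin 4} {b : Fin 4 → ℕ}, b ∈ divisorsOfDegree (G j) (e - d) →
      ∀ m, m ≠ j → b m ≤ 4 := by
    intro j b hb m hm
    obtain ⟨l, rfl⟩ := Fin.exists_succAbove_eq hm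
    simpa [hG] using (mem_divisorsOfDegree.1 hb).1 (j.succAbove l)
  have hM : ({![14, 14, e - 28, 0]} ∪ {G j | (j : Fin 4) (_ : (j : ℕ) < k)} :
      Set (Fin 4 → ℕ)) = ({![14, 14, e - 28, 0]} ∪
        (Finset.univ.filter fun j : Fin 4 => (j : ℕ) < k).image G : Finset (Fin 4 → ℕ)) := by
    ext b
    simp
  rw [hM, divCountSet_coe, Finset.union_biUnion, Finset.singleton_biUnion, Finset.image_biUnion,
    Finset.card_union_of_disjoint, Finset.card_biUnion,
    card_divisorsOfDegree_of_three (d := d) (by omega) (by omega) (by omega) (by omega)]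
  · have hcard : ∀ j, (divisorsOfDegree (G j) (e - d)).card = 125 := fun j => by
      rw [hG, card_divisorsOfDegree_insertNth j (by omega) (by omega)]
      norm_num
    simp only [hcard, Finset.sum_const, Fin.card_filter_val_lt, smul_eq_mul]
    rw [min_eq_right hk, mul_comm]
  · intro j _ l _ hjl
    refine Finset.disjoint_left.2 fun b hj hl => ?_
    have hb : ∀ m, b m ≤ 4 := fun m => by
      rcases eq_or_ne m j with rfl | hm
      · exact hGle hl m hjl
      · exact hGle hj m hm
    have hsum := (mem_divisorsOfDegree.1 hj).2
    rw [Fin.sum_univ_four] at hsum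
    have := hb 0
    have := hb 1
    have := hb 2
    have := hb 3
    omega
  · refine Finset.disjoint_left.2 fun b hF hb => ?_
    obtain ⟨j, -, hj⟩ := Finset.mem_biUnion.1 hb
    have hle := hGle hj
    simp [mem_divisorsOfDegree, Fin.forall_fin_succ, Fin.sum_univ_four] at hF
    have h0 := hle 0
    have h1 := hle 1
    have h2 := hle 2
    fin_cases j <;> simp at h0 h1 h2 <;> omega

/-- **Non-log-concave pure `O`-sequences of codimension 4 and types 2–5.**
For `e ≥ 42`, let `F = x^14 y^14 z^(e-28)` and let `G₁, G₂, G₃, G₄` be the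
monomials obtained by placing the exponent `e - 12` in each of the four
variables and `4` in the remaining three. For each `1 ≤ k ≤ 4`, the pure
`O`-sequence `h` generated by `F, G₁, …, G_k` satisfies
`h (e-14) = 120 + 125k`, `h (e-13) = 105 + 125k`, `h (e-12) = 91 + 125k`,
and `h (e-13)^2 < h (e-14) * h (e-12)`; in particular `h` is not
log-concave. -/
theorem stmt_15 (e : ℕ) (he : 42 ≤ e)
    (F : Fin 4 → ℕ) (hF : F = ![14, 14, e - 28, 0])
    (G : Fin 4 → Fin 4 → ℕ)
    (hG : G = ![![e - 12, 4, 4, 4], ![4, e - 12, 4, 4], ![4, 4, e - 12, 4],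
      ![4, 4, 4, e - 12]])
    (k : ℕ) (hk1 : 1 ≤ k) (hk2 : k ≤ 4)
    (M : Set (Fin 4 → ℕ)) (hM : M = {F} ∪ {G j | (j : Fin 4) (_ : (j : ℕ) < k)}) :
    divCountSet M (e - 14) = 120 + 125 * k ∧
      divCountSet M (e - 13) = 105 + 125 * k ∧
      divCountSet M (e - 12) = 91 + 125 * k ∧
      (divCountSet M (e - 13)) ^ 2 <
        divCountSet M (e - 14) * divCountSet M (e - 12) := by
  have hG' : ∀ j, G j = j.insertNth (e - 12) fun _ => 4 := by
    intro j
    subst hG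
    ext m
    fin_cases j <;> fin_cases m <;> rfl
  subst hM hF
  rw [divCountSet_of_codegree he (by norm_num) (by norm_num) hk2 hG',
    divCountSet_of_codegree he (by norm_num) (by norm_num) hk2 hG',
    divCountSet_of_codegree he (by norm_num) (by norm_num) hk2 hG']
  simp only [Finset.sum_range_succ, Finset.sum_range_zero]
  refine ⟨by norm_num, by norm_num, by norm_num, ?_⟩
  nlinarith
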